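/- arXiv:2102.13608 — 3 statements merged into one kernel-verified Lean document; each statement's English description precedes it below -/
import Mathlib

section
/- Let λ ≠ 1 be a generalized eigenvalue of the pencil (M, P) with eigenvector p = (p_s, p_l) ∈ ℝ^{s+l}, i.e., M p = λ P p and p ≠ 0. Then p_s ≠ 0, p_l ≠ 0, p_s = (λ−1)⁻¹ M₁⁻¹ M₂ᵀ p_l, and ν = (λ−1)² satisfies both generalized eigenproblems (M₂ M₁⁻¹ M₂ᵀ) p_l = ν M₃ p_l and (M₂ᵀ M₃⁻¹ M₂) p_s = ν M₁ p_s. -/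
open Matrix

/-!
Read blockwise, the eigenproblem says `B y = (c - 1) A x` and `C x = (c - 1) D y`, where `(x, y)` is
the eigenvector. Since `c ≠ 1` and the diagonal blocks are invertible, each of `x` and `y`
determines the other, and eliminating either one leaves an eigenproblem with eigenvalue `(c - 1)²`
for the other.
-/

section Blocks

variable {R m n : Type*} [Fintype m] [Fintype n]

theorem fromBlocks_mulVec_eq_smul_fromBlocks_diag_iff [Ring R] {A : Matrix m m R}
    {B : Matrix m n R} {C : Matrix n m R} {D : Matrix n n R} {c : R} {p : m ⊕ n → R} :
    fromBlocks A B C D *ᵥ p = c • (fromBlocks A 0 0 D *ᵥ p) ↔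
      B *ᵥ (p ∘ Sum.inr) = (c - 1) • (A *ᵥ (p ∘ Sum.inl)) ∧
        C *ᵥ (p ∘ Sum.inl) = (c - 1) • (D *ᵥ (p ∘ Sum.inr)) := by
  have smul_elim (u : m → R) (v : n → R) : c • Sum.elim u v = Sum.elim (c • u) (c • v) := by
    ext (i | j) <;> rfl
  simp only [fromBlocks_mulVec, smul_elim, Sum.elim_eq_iff, zero_mulVec, add_zero, sub_smul,
    one_smul, eq_sub_iff_add_eq, add_comm]

theorem eq_zero_of_comp_inl_of_comp_inr [Zero R] {α β : Type*} {p : α ⊕ β → R}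
    (hl : p ∘ Sum.inl = 0) (hr : p ∘ Sum.inr = 0) : p = 0 := by
  rw [← Sum.elim_comp_inl_inr p, hl, hr, Sum.elim_zero_zero]

theorem inv_mulVec_eq_smul [CommRing R] [DecidableEq m] {A : Matrix m m R} (hA : IsUnit A) {c : R}
    {x w : m → R} (h : w = c • (A *ᵥ x)) : A⁻¹ *ᵥ w = c • x := by
  obtain ⟨_⟩ := hA.nonempty_invertible
  exact inv_mulVec_eq_vec (by rw [mulVec_smul, h])

theorem mul_inv_mul_mulVec_eq_sq_smul [CommRing R] [DecidableEq m] {k : Type*} {A : Matrix m m R}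
    (hA : IsUnit A) {B : Matrix m n R} {C : Matrix k m R} {D : Matrix k n R} {c : R}
    {x : m → R} {y : n → R} (hB : B *ᵥ y = c • (A *ᵥ x)) (hC : C *ᵥ x = c • (D *ᵥ y)) :
    (C * A⁻¹ * B) *ᵥ y = c ^ 2 • (D *ᵥ y) :=
  calc
    (C * A⁻¹ * B) *ᵥ y = C *ᵥ (A⁻¹ *ᵥ (B *ᵥ y)) := by simp only [mulVec_mulVec, Matrix.mul_assoc]
    _ = c • (C *ᵥ x) := by rw [inv_mulVec_eq_smul hA hB, mulVec_smul]
    _ = c ^ 2 • (D *ᵥ y) := by rw [hC, smul_smul, sq]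

theorem eq_zero_of_mulVec_eq_smul_mulVec [Ring R] [NoZeroDivisors R] {k : Type*}
    {C : Matrix k m R} {D : Matrix k n R} (hD : Function.Injective D.mulVec) {c : R} (hc : c ≠ 0)
    {x : m → R} {y : n → R} (h : C *ᵥ x = c • (D *ᵥ y)) (hx : x = 0) : y = 0 := by
  have hDy : D *ᵥ y = 0 := by
    rw [hx, mulVec_zero] at h
    exact (smul_eq_zero.1 h.symm).resolve_left hc
  exact hD (hDy.trans (mulVec_zero D).symm)

theorem posDef_diag_of_posDef_fromBlocks [Ring R] [PartialOrder R] [StarRing R] {α β : Type*}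
    {A : Matrix α α R} {B : Matrix α β R} {C : Matrix β α R} {D : Matrix β β R}
    (h : (fromBlocks A B C D).PosDef) : A.PosDef ∧ D.PosDef :=
  ⟨h.submatrix Sum.inl_injective, h.submatrix Sum.inr_injective⟩

end Blocks

theorem eigenvector_structure_for_nonunit_eigenvalues_general {K m n : Type*} [Field K]
    [Fintype m] [Fintype n] [DecidableEq m] [DecidableEq n] {A : Matrix m m K} {B : Matrix m n K}
    {C : Matrix n m K} {D : Matrix n n K} (hA : IsUnit A) (hD : IsUnit D) {c : K} (hc : c ≠ 1)
    {p : m ⊕ n → K} (hp : p ≠ 0)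
    (heig : fromBlocks A B C D *ᵥ p = c • (fromBlocks A 0 0 D *ᵥ p)) :
    p ∘ Sum.inl ≠ 0 ∧
    p ∘ Sum.inr ≠ 0 ∧
    p ∘ Sum.inl = (c - 1)⁻¹ • (A⁻¹ *ᵥ (B *ᵥ (p ∘ Sum.inr))) ∧
    (C * A⁻¹ * B) *ᵥ (p ∘ Sum.inr) = (c - 1) ^ 2 • (D *ᵥ (p ∘ Sum.inr)) ∧
    (B * D⁻¹ * C) *ᵥ (p ∘ Sum.inl) = (c - 1) ^ 2 • (A *ᵥ (p ∘ Sum.inl)) := by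
  have hc' : c - 1 ≠ 0 := sub_ne_zero.2 hc
  obtain ⟨hB, hC⟩ := fromBlocks_mulVec_eq_smul_fromBlocks_diag_iff.1 heig
  refine ⟨fun hl ↦ hp ?_, fun hr ↦ hp ?_, ?_, mul_inv_mul_mulVec_eq_sq_smul hA hB hC,
    mul_inv_mul_mulVec_eq_sq_smul hD hC hB⟩
  · exact eq_zero_of_comp_inl_of_comp_inr hl
      (eq_zero_of_mulVec_eq_smul_mulVec (mulVec_injective_of_isUnit hD) hc' hC hl)
  · exact eq_zero_of_comp_inl_of_comp_inr
      (eq_zero_of_mulVec_eq_smul_mulVec (mulVec_injective_of_isUnit hA) hc' hB hr) hr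
  · rw [inv_mulVec_eq_smul hA hB, inv_smul_smul₀ hc']

/-- If `λ ≠ 1` is a generalized eigenvalue of the pencil `(M, P)` with
`M = [[M₁, M₂ᵀ],[M₂, M₃]] ≻ 0` and `P = [[M₁, 0],[0, M₃]]`, and eigenvector
`p = (p_s, p_l)`, then `p_s ≠ 0`, `p_l ≠ 0`, `p_s = (λ−1)⁻¹ M₁⁻¹ M₂ᵀ p_l`, and
`ν = (λ−1)²` satisfies `(M₂ M₁⁻¹ M₂ᵀ) p_l = ν M₃ p_l` and `(M₂ᵀ M₃⁻¹ M₂) p_s = ν M₁ p_s`. -/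
theorem eigenvector_structure_for_nonunit_eigenvalues
    {s l : ℕ} (hs : 0 < s) (hl : 0 < l)
    (M1 : Matrix (Fin s) (Fin s) ℝ) (M2 : Matrix (Fin l) (Fin s) ℝ)
    (M3 : Matrix (Fin l) (Fin l) ℝ)
    (M P : Matrix (Fin s ⊕ Fin l) (Fin s ⊕ Fin l) ℝ)
    (hMdef : M = fromBlocks M1 M2ᵀ M2 M3) (hM : M.PosDef)
    (hPdef : P = fromBlocks M1 0 0 M3)
    (lam : ℝ) (hlam : lam ≠ 1) (p : Fin s ⊕ Fin l → ℝ) (hp : p ≠ 0)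
    (heig : M *ᵥ p = lam • (P *ᵥ p)) :
    (fun i => p (Sum.inl i)) ≠ 0 ∧
    (fun j => p (Sum.inr j)) ≠ 0 ∧
    (fun i => p (Sum.inl i)) =
      (lam - 1)⁻¹ • (M1⁻¹ *ᵥ (M2ᵀ *ᵥ fun j => p (Sum.inr j))) ∧
    (M2 * M1⁻¹ * M2ᵀ) *ᵥ (fun j => p (Sum.inr j)) =
      (lam - 1) ^ 2 • (M3 *ᵥ fun j => p (Sum.inr j)) ∧
    (M2ᵀ * M3⁻¹ * M2) *ᵥ (fun i => p (Sum.inl i)) =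
      (lam - 1) ^ 2 • (M1 *ᵥ fun i => p (Sum.inl i)) := by
  subst hMdef hPdef
  obtain ⟨hM1, hM3⟩ := posDef_diag_of_posDef_fromBlocks hM
  exact eigenvector_structure_for_nonunit_eigenvalues_general hM1.isUnit hM3.isUnit hlam hp heig
end

section
/- Every generalized eigenvalue λ of the pencil (M, P) satisfies 0 < λ < 2; more precisely, every generalized eigenvalue lies in (0, 1) ∪ {1} ∪ (1, 2). -/
open Matrix

/-!
Changing the sign of the second block of `p` turns `M p = λ P p` into `M q = (2 - λ) P q`, so the
generalized eigenvalues of `(M, P)` are symmetric about `1`. As `M` and `P` are both positive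
definite, `λ` and `2 - λ` are both positive.
-/

section

variable {m n R : Type*} [Finite m] [Finite n] [Ring R] [PartialOrder R] [StarRing R]
  [IsOrderedAddMonoid R]

theorem posDef_fromBlocks_zero_zero {A : Matrix m m R} {D : Matrix n n R} (hA : A.PosDef)
    (hD : D.PosDef) : (fromBlocks A 0 0 D).PosDef := by
  cases nonempty_fintype m
  cases nonempty_fintype n
  refine .of_dotProduct_mulVec_pos
    (hA.isHermitian.fromBlocks conjTranspose_zero hD.isHermitian) fun p hp ↦ ?_
  obtain ⟨x, y, rfl⟩ : ∃ x y, p = Sum.elim x y := ⟨_, _, (Sum.elim_comp_inl_inr p).symm⟩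
  have quadratic_form_eq : star (Sum.elim x y) ⬝ᵥ (fromBlocks A 0 0 D *ᵥ Sum.elim x y) =
      star x ⬝ᵥ (A *ᵥ x) + star y ⬝ᵥ (D *ᵥ y) := by
    simp [fromBlocks_mulVec, dotProduct]
  rw [quadratic_form_eq]
  obtain hx | rfl := ne_or_eq x 0
  · exact add_pos_of_pos_of_nonneg (hA.dotProduct_mulVec_pos hx)
      (hD.posSemidef.dotProduct_mulVec_nonneg y)
  · have hy : y ≠ 0 := by
      rintro rfl
      exact hp Sum.elim_zero_zero
    simpa using hD.dotProduct_mulVec_pos hy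

theorem posDef_fromBlocks_zero_zero_of_posDef_fromBlocks {A : Matrix m m R} {B : Matrix m n R}
    {C : Matrix n m R} {D : Matrix n n R} (h : (fromBlocks A B C D).PosDef) :
    (fromBlocks A 0 0 D).PosDef :=
  posDef_fromBlocks_zero_zero (h.submatrix Sum.inl_injective) (h.submatrix Sum.inr_injective)

end

/-- `μ` is an eigenvalue of the matrix pencil `(A, B)`. The condition is `A x = μ B x` for some
nonzero `x`, rather than one on `B⁻¹ * A`, so `B` need not be invertible. -/
def IsGeneralizedEigenvalue {n R : Type*} [Fintype n] [NonUnitalNonAssocSemiring R]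
    (A B : Matrix n n R) (μ : R) : Prop :=
  ∃ x : n → R, x ≠ 0 ∧ A *ᵥ x = μ • (B *ᵥ x)

section

variable {m n R : Type*} [Fintype m] [Fintype n]

theorem IsGeneralizedEigenvalue.pos [CommRing R] [PartialOrder R] [StarRing R] [MulPosReflectLT R]
    {A B : Matrix n n R} {μ : R} (hμ : IsGeneralizedEigenvalue A B μ) (hA : A.PosDef)
    (hB : B.PosDef) : 0 < μ := by
  obtain ⟨x, hx, hAx⟩ := hμ
  have rayleigh : star x ⬝ᵥ (A *ᵥ x) = μ * (star x ⬝ᵥ (B *ᵥ x)) := by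
    rw [hAx, dotProduct_smul, smul_eq_mul]
  exact pos_of_mul_pos_left (rayleigh ▸ hA.dotProduct_mulVec_pos hx)
    (hB.dotProduct_mulVec_pos hx).le

theorem IsGeneralizedEigenvalue.two_sub [Ring R] {A : Matrix m m R} {B : Matrix m n R}
    {C : Matrix n m R} {D : Matrix n n R} {μ : R}
    (hμ : IsGeneralizedEigenvalue (fromBlocks A B C D) (fromBlocks A 0 0 D) μ) :
    IsGeneralizedEigenvalue (fromBlocks A B C D) (fromBlocks A 0 0 D) (2 - μ) := by
  obtain ⟨p, hp, hMp⟩ := hμ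
  obtain ⟨x, y, rfl⟩ : ∃ x y, p = Sum.elim x y := ⟨_, _, (Sum.elim_comp_inl_inr p).symm⟩
  have hfst : A *ᵥ x + B *ᵥ y = μ • (A *ᵥ x) := by
    ext i
    simpa [fromBlocks_mulVec] using congrFun hMp (Sum.inl i)
  have hsnd : C *ᵥ x + D *ᵥ y = μ • (D *ᵥ y) := by
    ext j
    simpa [fromBlocks_mulVec] using congrFun hMp (Sum.inr j)
  have hfst_neg : A *ᵥ x + B *ᵥ (-y) = (2 - μ) • (A *ᵥ x) := by
    rw [sub_smul, two_smul, ← hfst, mulVec_neg]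
    abel
  have hsnd_neg : C *ᵥ x + D *ᵥ (-y) = (2 - μ) • (D *ᵥ (-y)) := by
    rw [sub_smul, two_smul, mulVec_neg, smul_neg, ← hsnd]
    abel
  refine ⟨Sum.elim x (-y), fun hq ↦ hp ?_, ?_⟩
  · simpa [funext_iff] using hq
  · ext (i | j)
    · simpa [fromBlocks_mulVec] using congrFun hfst_neg i
    · simpa [fromBlocks_mulVec] using congrFun hsnd_neg j

end

theorem generalized_eigenvalues_of_block_pencil_in_unit_intervals_general
    {m n R : Type*} [Fintype m] [Fintype n] [CommRing R] [PartialOrder R] [StarRing R]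
    [IsOrderedAddMonoid R] [MulPosReflectLT R]
    {A : Matrix m m R} {B : Matrix m n R} {C : Matrix n m R} {D : Matrix n n R} {μ : R}
    (hM : (fromBlocks A B C D).PosDef)
    (hμ : IsGeneralizedEigenvalue (fromBlocks A B C D) (fromBlocks A 0 0 D) μ) :
    0 < μ ∧ μ < 2 :=
  have hP := posDef_fromBlocks_zero_zero_of_posDef_fromBlocks hM
  ⟨hμ.pos hM hP, sub_pos.mp (hμ.two_sub.pos hM hP)⟩

/-- For the pencil `(M, P)` with `M = [[M₁, M₂ᵀ],[M₂, M₃]]` symmetric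
positive definite and `P = [[M₁, 0],[0, M₃]]`, every generalized eigenvalue `λ`
lies in `(0, 1) ∪ {1} ∪ (1, 2)` (in particular `0 < λ < 2`). -/
theorem generalized_eigenvalues_of_block_pencil_in_unit_intervals
    {s l : ℕ} (hs : 0 < s) (hl : 0 < l)
    (M1 : Matrix (Fin s) (Fin s) ℝ) (M2 : Matrix (Fin l) (Fin s) ℝ)
    (M3 : Matrix (Fin l) (Fin l) ℝ)
    (M P : Matrix (Fin s ⊕ Fin l) (Fin s ⊕ Fin l) ℝ)
    (hMdef : M = fromBlocks M1 M2ᵀ M2 M3) (hM : M.PosDef)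
    (hPdef : P = fromBlocks M1 0 0 M3)
    (lam : ℝ) (p : Fin s ⊕ Fin l → ℝ) (hp : p ≠ 0)
    (heig : M *ᵥ p = lam • (P *ᵥ p)) :
    (0 < lam ∧ lam < 1) ∨ lam = 1 ∨ (1 < lam ∧ lam < 2) := by
  subst hMdef hPdef
  obtain ⟨hpos, hlt⟩ :=
    generalized_eigenvalues_of_block_pencil_in_unit_intervals_general hM ⟨p, hp, heig⟩
  exact (lt_trichotomy lam 1).imp (⟨hpos, ·⟩) (.imp_right (⟨·, hlt⟩))
end

section
/- Let A be a real m×n matrix, ρ > 0, δ > 0, and let H be a real symmetric positive-definite n×n matrix such that H − ρ·I_n is positive semidefinite. Then the matrix A H⁻¹ Aᵀ + δ·I_m is symmetric positive definite and all of its eigenvalues lie in the interval [δ, σ_max(A)²/ρ + δ], where σ_max(A) is the largest singular value of A; in particular λ_min(A H⁻¹ Aᵀ + δ I_m) ≥ δ and λ_max(A H⁻¹ Aᵀ + δ I_m) ≤ σ_max(A)²/ρ + δ. -/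
open Matrix

/-- The largest singular value of a real matrix `A`: the operator norm of the induced
linear map between Euclidean spaces. -/
noncomputable def sigmaMax {m n : Type*} [Fintype m] [Fintype n] [DecidableEq n]
    (A : Matrix m n ℝ) : ℝ :=
  ‖LinearMap.toContinuousLinearMap (Matrix.toEuclideanLin A)‖

/-!
In the Loewner order, `ρI ≤ H` gives `H⁻¹ ≤ ρ⁻¹I`, because `H - ρI` and `ρ⁻¹I - H⁻¹` are the two
Schur complements of the block matrix `[H, I; I, ρ⁻¹I]`. Conjugating by `A` yields
`0 ≤ A H⁻¹ Aᴴ ≤ ρ⁻¹ A Aᴴ ≤ (‖A‖² / ρ) I`, and scalar bounds in the Loewner order are bounds on the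
eigenvalues.
-/

section FieldCoefficients

variable {K n : Type*} [Field K] [PartialOrder K] [StarRing K] [StarOrderedRing K]
  [Fintype n] [DecidableEq n]

theorem posSemidef_inv_sub_inv {M N : Matrix n n K} (hM : M.PosDef) (hMN : (N - M).PosSemidef) :
    (M⁻¹ - N⁻¹).PosSemidef := by
  have hN : N.PosDef := by simpa only [add_sub_cancel] using hM.add_posSemidef hMN
  let := hN.isUnit.invertible
  let := hM.inv.isUnit.invertible
  have hblock : (fromBlocks N 1 1ᴴ M⁻¹).PosSemidef := by
    rwa [PosDef.fromBlocks₂₂ _ _ hM.inv, conjTranspose_one, one_mul, mul_one,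
      nonsing_inv_nonsing_inv _ ((isUnit_iff_isUnit_det M).mp hM.isUnit)]
  rwa [PosDef.fromBlocks₁₁ _ _ hN, conjTranspose_one, one_mul, mul_one] at hblock

end FieldCoefficients

section Loewner

open scoped ComplexOrder MatrixOrder Matrix.Norms.L2Operator

variable {𝕜 m n : Type*} [RCLike 𝕜] [Fintype n]

theorem mul_mul_conjTranspose_le_mul_mul_conjTranspose [Finite m] {M N : Matrix n n 𝕜}
    (hMN : M ≤ N) (A : Matrix m n 𝕜) : A * M * Aᴴ ≤ A * N * Aᴴ := by
  rw [le_iff, ← Matrix.sub_mul, ← Matrix.mul_sub]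
  exact (le_iff.mp hMN).mul_mul_conjTranspose_same A

variable [DecidableEq n]

theorem inv_le_inv_smul_one {H : Matrix n n 𝕜} {ρ : ℝ} (hρ : 0 < ρ)
    (hH : ρ • (1 : Matrix n n 𝕜) ≤ H) : H⁻¹ ≤ ρ⁻¹ • (1 : Matrix n n 𝕜) := by
  have hinv : (ρ • (1 : Matrix n n 𝕜))⁻¹ = ρ⁻¹ • 1 :=
    inv_eq_right_inv (by simp [smul_smul, hρ.ne'])
  rw [← hinv]
  exact posSemidef_inv_sub_inv (PosDef.one.smul hρ) hH

theorem le_norm_smul_one {M : Matrix n n 𝕜} (hM : M.IsHermitian) :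
    M ≤ ‖M‖ • (1 : Matrix n n 𝕜) := by
  nontriviality Matrix n n 𝕜
  rw [← Algebra.algebraMap_eq_smul_one]
  refine le_algebraMap_of_spectrum_le (fun r hr ↦ ?_) hM
  have hr𝕜 : (r : 𝕜) ∈ spectrum 𝕜 M := spectrum.algebraMap_mem 𝕜 hr
  calc r ≤ ‖(r : 𝕜)‖ := by simpa only [RCLike.norm_ofReal] using le_abs_self r
    _ ≤ ‖M‖ := spectrum.norm_le_norm_of_mem hr𝕜

theorem le_eigenvalues_of_smul_one_le {M : Matrix n n 𝕜} (hM : M.IsHermitian) {a : ℝ}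
    (ha : a • (1 : Matrix n n 𝕜) ≤ M) (i : n) : a ≤ hM.eigenvalues i := by
  rw [← Algebra.algebraMap_eq_smul_one] at ha
  exact (algebraMap_le_iff_le_spectrum hM).mp ha _ (hM.eigenvalues_mem_spectrum_real i)

theorem eigenvalues_le_of_le_smul_one {M : Matrix n n 𝕜} (hM : M.IsHermitian) {b : ℝ}
    (hb : M ≤ b • (1 : Matrix n n 𝕜)) (i : n) : hM.eigenvalues i ≤ b := by
  rw [← Algebra.algebraMap_eq_smul_one] at hb
  exact (le_algebraMap_iff_spectrum_le hM).mp hb _ (hM.eigenvalues_mem_spectrum_real i)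

variable [Fintype m] [DecidableEq m]

theorem mul_conjTranspose_self_le_norm_sq_smul_one (A : Matrix m n 𝕜) :
    A * Aᴴ ≤ ‖A‖ ^ 2 • (1 : Matrix m m 𝕜) := by
  have hnorm : ‖A * Aᴴ‖ = ‖A‖ ^ 2 := by
    simpa only [conjTranspose_conjTranspose, l2_opNorm_conjTranspose, ← sq] using
      l2_opNorm_conjTranspose_mul_self Aᴴ
  exact hnorm ▸ le_norm_smul_one (isHermitian_mul_conjTranspose_self A)

theorem mul_inv_mul_conjTranspose_le_smul_one (A : Matrix m n 𝕜) {H : Matrix n n 𝕜} {ρ : ℝ}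
    (hρ : 0 < ρ) (hH : ρ • (1 : Matrix n n 𝕜) ≤ H) :
    A * H⁻¹ * Aᴴ ≤ (‖A‖ ^ 2 / ρ) • (1 : Matrix m m 𝕜) :=
  calc A * H⁻¹ * Aᴴ
    _ ≤ A * (ρ⁻¹ • (1 : Matrix n n 𝕜)) * Aᴴ :=
      mul_mul_conjTranspose_le_mul_mul_conjTranspose (inv_le_inv_smul_one hρ hH) A
    _ = ρ⁻¹ • (A * Aᴴ) := by rw [Matrix.mul_smul, Matrix.mul_one, Matrix.smul_mul]
    _ ≤ ρ⁻¹ • ‖A‖ ^ 2 • (1 : Matrix m m 𝕜) :=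
      smul_le_smul_of_nonneg_left (mul_conjTranspose_self_le_norm_sq_smul_one A)
        (inv_nonneg.mpr hρ.le)
    _ = (‖A‖ ^ 2 / ρ) • (1 : Matrix m m 𝕜) := by rw [smul_smul, div_eq_inv_mul]

theorem schur_complement_eigenvalue_bounds_general (A : Matrix m n 𝕜) {ρ δ : ℝ} (hρ : 0 < ρ)
    (hδ : 0 < δ) {H : Matrix n n 𝕜} (hHρ : (H - ρ • (1 : Matrix n n 𝕜)).PosSemidef) :
    (A * H⁻¹ * Aᴴ + δ • (1 : Matrix m m 𝕜)).PosDef ∧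
    ∀ (hB : (A * H⁻¹ * Aᴴ + δ • (1 : Matrix m m 𝕜)).IsHermitian) (i : m),
      δ ≤ hB.eigenvalues i ∧ hB.eigenvalues i ≤ ‖A‖ ^ 2 / ρ + δ := by
  have hH : H.PosSemidef := by
    simpa only [sub_add_cancel] using hHρ.add (PosSemidef.one.smul hρ.le)
  have hS : (A * H⁻¹ * Aᴴ).PosSemidef := hH.inv.mul_mul_conjTranspose_same A
  refine ⟨PosDef.posSemidef_add hS (PosDef.one.smul hδ), fun hB i ↦ ⟨?_, ?_⟩⟩
  · exact le_eigenvalues_of_smul_one_le hB (le_add_of_nonneg_left hS.nonneg) i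
  · refine eigenvalues_le_of_le_smul_one hB ?_ i
    rw [add_smul]
    gcongr
    exact mul_inv_mul_conjTranspose_le_smul_one A hρ (le_iff.mpr hHρ)

end Loewner

open scoped Matrix.Norms.L2Operator in
theorem sigmaMax_eq_l2_opNorm {m n : Type*} [Fintype m] [Fintype n] [DecidableEq n]
    (A : Matrix m n ℝ) : sigmaMax A = ‖A‖ :=
  rfl

/-- For `A ∈ ℝ^{m×n}`, `ρ, δ > 0`, and `H ≻ 0` with `H − ρI ⪰ 0`,
the matrix `A H⁻¹ Aᵀ + δ I` is symmetric positive definite and its eigenvalues lie in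
`[δ, σ_max(A)²/ρ + δ]`. -/
theorem schur_complement_eigenvalue_bounds
    {m n : ℕ} (A : Matrix (Fin m) (Fin n) ℝ) (ρ δ : ℝ) (hρ : 0 < ρ) (hδ : 0 < δ)
    (H : Matrix (Fin n) (Fin n) ℝ) (hH : H.PosDef)
    (hHρ : (H - ρ • (1 : Matrix (Fin n) (Fin n) ℝ)).PosSemidef) :
    (A * H⁻¹ * Aᵀ + δ • (1 : Matrix (Fin m) (Fin m) ℝ)).PosDef ∧
    ∀ (hB : (A * H⁻¹ * Aᵀ + δ • (1 : Matrix (Fin m) (Fin m) ℝ)).IsHermitian)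
      (i : Fin m),
        δ ≤ hB.eigenvalues i ∧ hB.eigenvalues i ≤ (sigmaMax A) ^ 2 / ρ + δ := by
  rw [← conjTranspose_eq_transpose_of_trivial, sigmaMax_eq_l2_opNorm]
  exact schur_complement_eigenvalue_bounds_general A hρ hδ hHρ
end
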